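/- Let ρ : ℝ → ℝ be twice differentiable with ρ′(t) ≥ 0 for all t ≥ 0 and ρ″(t) ≥ 0 for all t. Fix b, σ ∈ ℝ and define ψ(s) = ρ((s − b)/√(s + σ²)) for s > −σ². If s > −σ² satisfies ρ′((s − b)/√(s + σ²)) < 0, then ψ is twice differentiable at s and ψ″(s) > 0. -/

import Mathlib

/-!
With `u = s + σ²`, the scaled residual is `r = √u - (b + σ²) / √u`, so `r''` has the sign of
`-(u + 3 (b + σ²)) = -(s + 3 b + 4 σ²)`. In `ψ'' = r'² ρ''(r) + r'' ρ'(r)` the first term is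
nonnegative, and the second is positive once `ρ'(r) < 0` and `r'' < 0`. As `ρ' ≥ 0` on `[0, ∞)`,
a negative `ρ'(r)` forces `r < 0`, i.e. `s < b`, and then
`s + 3 b + 4 σ² = (s + σ²) + 3 (b + σ²)` is positive.
-/

open scoped Topology

section ChainRule

variable {𝕜 F : Type*} [NontriviallyNormedField 𝕜] [NormedAddCommGroup F] [NormedSpace 𝕜 F]

theorem eventually_differentiableAt_of_deriv_ne_zero {f : 𝕜 → F} {x : 𝕜}
    (hf : ContinuousAt (deriv f) x) (hx : deriv f x ≠ 0) : ∀ᶠ y in 𝓝 x, DifferentiableAt 𝕜 f y :=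
  (hf.eventually_ne hx).mono fun _ ↦ differentiableAt_of_deriv_ne_zero

/-- `iteratedDeriv_scomp_two` does not apply here: it needs continuous second derivatives. -/
theorem hasDerivAt_deriv_scomp {f : 𝕜 → F} {g : 𝕜 → 𝕜} {x : 𝕜}
    (hf : ∀ᶠ y in 𝓝 (g x), DifferentiableAt 𝕜 f y) (hf' : DifferentiableAt 𝕜 (deriv f) (g x))
    (hg : ∀ᶠ y in 𝓝 x, DifferentiableAt 𝕜 g y) (hg' : DifferentiableAt 𝕜 (deriv g) x) :
    HasDerivAt (deriv (f ∘ g))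
      (deriv g x ^ 2 • deriv (deriv f) (g x) + deriv (deriv g) x • deriv f (g x)) x := by
  have hgx : DifferentiableAt 𝕜 g x := hg.self_of_nhds
  have hfg : deriv (f ∘ g) =ᶠ[𝓝 x] fun y ↦ deriv g y • deriv f (g y) := by
    filter_upwards [hgx.continuousAt.eventually hf, hg] with y hfy hgy
    exact deriv.scomp y hfy hgy
  have hf'g : HasDerivAt (fun y ↦ deriv f (g y)) (deriv g x • deriv (deriv f) (g x)) x :=
    hf'.hasDerivAt.scomp x hgx.hasDerivAt
  refine ((hg'.hasDerivAt.fun_smul hf'g).congr_of_eventuallyEq hfg).congr_deriv ?_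
  rw [smul_smul, sq]

end ChainRule

/-- The residual `s - b` of a datum `b` normalized by the standard deviation `√(s + v)`, where `v`
stands for the noise variance `σ²`. Meaningful for `-v < s`; the square root is `0` otherwise. -/
noncomputable def scaledResidual (b v s : ℝ) : ℝ := (s - b) / √(s + v)

section ScaledResidual

variable {b v s : ℝ}

theorem scaledResidual_nonneg (h : b ≤ s) : 0 ≤ scaledResidual b v s :=
  div_nonneg (sub_nonneg.2 h) (Real.sqrt_nonneg _)

theorem hasDerivAt_sqrt_add_const (hs : -v < s) :
    HasDerivAt (fun x ↦ √(x + v)) (1 / (2 * √(s + v))) s :=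
  ((hasDerivAt_id s).add_const v).sqrt (neg_lt_iff_pos_add.1 hs).ne'

theorem hasDerivAt_scaledResidual (hs : -v < s) :
    HasDerivAt (scaledResidual b v) ((s + b + 2 * v) / (2 * √(s + v) ^ 3)) s := by
  have hu : 0 < s + v := neg_lt_iff_pos_add.1 hs
  have hr : √(s + v) ≠ 0 := (Real.sqrt_pos.2 hu).ne'
  have hrr : √(s + v) ^ 2 = s + v := Real.sq_sqrt hu.le
  refine (((hasDerivAt_id' s).sub_const b).fun_div (hasDerivAt_sqrt_add_const hs) hr).congr_deriv ?_
  field_simp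
  linear_combination 2 * hrr

theorem hasDerivAt_deriv_scaledResidual (hs : -v < s) :
    HasDerivAt (deriv (scaledResidual b v)) (-(s + 3 * b + 4 * v) / (4 * √(s + v) ^ 5)) s := by
  have hu : 0 < s + v := neg_lt_iff_pos_add.1 hs
  have hr : √(s + v) ≠ 0 := (Real.sqrt_pos.2 hu).ne'
  have hrr : √(s + v) ^ 2 = s + v := Real.sq_sqrt hu.le
  have hderiv : deriv (scaledResidual b v) =ᶠ[𝓝 s]
      fun x ↦ (x + b + 2 * v) / (2 * √(x + v) ^ 3) := by
    filter_upwards [Ioi_mem_nhds hs] with x hx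
    exact (hasDerivAt_scaledResidual hx).deriv
  have hnum : HasDerivAt (fun x ↦ x + b + 2 * v) 1 s :=
    ((hasDerivAt_id' s).add_const b).add_const (2 * v)
  have hden : HasDerivAt (fun x ↦ 2 * √(x + v) ^ 3) (3 * √(s + v)) s := by
    refine (((hasDerivAt_sqrt_add_const hs).fun_pow 3).const_mul 2).congr_deriv ?_
    field_simp
    ring
  refine ((hnum.fun_div hden (by positivity)).congr_of_eventuallyEq hderiv).congr_deriv ?_
  field_simp
  linear_combination 8 * hrr

theorem negative_loss_derivative_gives_positive_curvature_general {ρ : ℝ → ℝ} (hs : -v < s)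
    (hb : 0 < s + 3 * b + 4 * v) (hρ' : DifferentiableAt ℝ (deriv ρ) (scaledResidual b v s))
    (hconv : 0 ≤ deriv (deriv ρ) (scaledResidual b v s))
    (hneg : deriv ρ (scaledResidual b v s) < 0) :
    DifferentiableAt ℝ (deriv (ρ ∘ scaledResidual b v)) s ∧
      0 < deriv (deriv (ρ ∘ scaledResidual b v)) s := by
  have hρ : ∀ᶠ t in 𝓝 (scaledResidual b v s), DifferentiableAt ℝ ρ t :=
    eventually_differentiableAt_of_deriv_ne_zero hρ'.continuousAt hneg.ne
  have hr : ∀ᶠ x in 𝓝 s, DifferentiableAt ℝ (scaledResidual b v) x := by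
    filter_upwards [Ioi_mem_nhds hs] with x hx
    exact (hasDerivAt_scaledResidual hx).differentiableAt
  have hr' := hasDerivAt_deriv_scaledResidual (b := b) hs
  have hr'_neg : deriv (deriv (scaledResidual b v)) s < 0 := by
    have hu : 0 < s + v := neg_lt_iff_pos_add.1 hs
    rw [hr'.deriv]
    exact div_neg_of_neg_of_pos (neg_neg_of_pos hb) (by positivity)
  have hψ' := hasDerivAt_deriv_scomp hρ hρ' hr hr'.differentiableAt
  refine ⟨hψ'.differentiableAt, ?_⟩
  rw [hψ'.deriv]
  exact add_pos_of_nonneg_of_pos (mul_nonneg (sq_nonneg _) hconv)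
    (mul_pos_of_neg_of_neg hr'_neg hneg)

end ScaledResidual

/-- For a twice differentiable loss ρ with ρ′ ≥ 0 on [0, ∞) and ρ″ ≥ 0 everywhere, the
robust scalar fidelity ψ(s) = ρ((s − b)/√(s + σ²)) has strictly positive second derivative
at any s > −σ² where ρ′ evaluated at the scaled residual is negative. -/
theorem negative_loss_derivative_gives_positive_curvature
    (ρ : ℝ → ℝ) (hρ : Differentiable ℝ ρ) (hρ' : Differentiable ℝ (deriv ρ))
    (hmono : ∀ t : ℝ, 0 ≤ t → 0 ≤ deriv ρ t)
    (hconv : ∀ t : ℝ, 0 ≤ deriv (deriv ρ) t)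
    (b σ s : ℝ) (hs : s > -σ ^ 2)
    (hneg : deriv ρ ((s - b) / Real.sqrt (s + σ ^ 2)) < 0) :
    DifferentiableAt ℝ (deriv (fun s : ℝ => ρ ((s - b) / Real.sqrt (s + σ ^ 2)))) s ∧
    0 < deriv (deriv (fun s : ℝ => ρ ((s - b) / Real.sqrt (s + σ ^ 2)))) s := by
  have hsb : s < b := lt_of_not_ge fun h ↦ hneg.not_ge (hmono _ (scaledResidual_nonneg h))
  exact negative_loss_derivative_gives_positive_curvature_general hs (by linarith) (hρ' _)
    (hconv _) hneg
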